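/- arXiv:1504.03308 — 2 statements merged into one kernel-verified Lean document; each statement's English description precedes it below -/
import Mathlib

section
/- Related dynamical systems map solutions of rough differential equations to solutions: Let U ⊆ ℝ^d and Ũ ⊆ ℝ^{d̃} be open, f : U → Ũ smooth, and let F : U → L(W, ℝ^d) and F̃ : Ũ → L(W, ℝ^{d̃}) be smooth and f-related, i.e. f'(x)(F_w(x)) = F̃_w(f(x)) for all x ∈ U and w ∈ W. Let X = (x, 𝕏) be a weak-geometric p-rough path with control ω on [0,T], and suppose (z, z†) solves dz = F_{dX}(z) with z_0 = z̄₀ and z([0,T]) ⊆ U; that is: z_s† = F_{(·)}(z_s) for all s, (z, z†) is an ℝ^d-valued rough path controlled by X, and there exist C < ∞ and δ > 0 with |z_t − z_s − F_{x_{s,t}}(z_s) − G_s(𝕏_{s,t})| ≤ C ω(s,t)^{3/p} whenever 0 ≤ s ≤ t ≤ T and t − s ≤ δ, where G_s ∈ L(W ⊗ W, ℝ^d) is the linear extension of (w, w̃) ↦ (∂_{F_w(z_s)} F_{w̃})(z_s). Then z̃_t := f(z_t), z̃_s† := F̃_{(·)}(z̃_s) = f'(z_s) ∘ z_s† solves dz̃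 = F̃_{dX}(z̃) with z̃_0 = f(z̄₀): (z̃, z̃†) is an ℝ^{d̃}-valued rough path controlled by X and there exist C̃ < ∞ and δ̃ > 0 with |z̃_t − z̃_s − F̃_{x_{s,t}}(z̃_s) − G̃_s(𝕏_{s,t})| ≤ C̃ ω(s,t)^{3/p} whenever t − s ≤ δ̃, where G̃_s is the linear extension of (w, w̃) ↦ (∂_{F̃_w(z̃_s)} F̃_{w̃})(z̃_s). -/
noncomputable section

open scoped BigOperators

/-- `ℝ^n` with the Euclidean norm. -/
abbrev Euc (n : ℕ) : Type := EuclideanSpace ℝ (Fin n)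

/-- The `i`-th standard basis vector of `ℝ^n`. -/
def eb {n : ℕ} (i : Fin n) : Euc n := EuclideanSpace.single i 1

/-- Tensor product of two Euclidean vectors, realized in `ℝ^{n×m}` with the Euclidean norm. -/
def tensorE {n m : ℕ} (v : Euc n) (w : Euc m) : EuclideanSpace ℝ (Fin n × Fin m) :=
  (EuclideanSpace.equiv (Fin n × Fin m) ℝ).symm fun p => v p.1 * w p.2

/-- Application of the (unique) linear extension of a bilinear map `B` to a tensor
`X ∈ ℝ^n ⊗ ℝ^m ≅ ℝ^{n × m}`. -/
def tapply {n m : ℕ} {V : Type*} [NormedAddCommGroup V] [NormedSpace ℝ V]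
    (B : Euc n → Euc m → V) (X : EuclideanSpace ℝ (Fin n × Fin m)) : V :=
  ∑ q : Fin n × Fin m, X q • B (eb q.1) (eb q.2)
/-- `ω` is a control on the simplex `{(s,t) : 0 ≤ s ≤ t ≤ T}`. -/
structure IsControl (T : ℝ) (ω : ℝ → ℝ → ℝ) : Prop where
  cont : ContinuousOn (fun q : ℝ × ℝ => ω q.1 q.2)
    {q : ℝ × ℝ | 0 ≤ q.1 ∧ q.1 ≤ q.2 ∧ q.2 ≤ T}
  nonneg : ∀ ⦃s t : ℝ⦄, 0 ≤ s → s ≤ t → t ≤ T → 0 ≤ ω s t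
  zero : ∀ ⦃s : ℝ⦄, 0 ≤ s → s ≤ T → ω s s = 0
  superadditive : ∀ ⦃s t u : ℝ⦄, 0 ≤ s → s ≤ t → t ≤ u → u ≤ T → ω s t + ω t u ≤ ω s u
/-- `(x, XX)` is a `p`-rough path with control `ω` on `[0,T]`. -/
structure IsRoughPath (T p : ℝ) {k : ℕ} (ω : ℝ → ℝ → ℝ)
    (x : ℝ → Euc k) (XX : ℝ → ℝ → EuclideanSpace ℝ (Fin k × Fin k)) : Prop where
  cont_x : ContinuousOn x (Set.Icc 0 T)
  cont_XX : ContinuousOn (fun q : ℝ × ℝ => XX q.1 q.2)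
    {q : ℝ × ℝ | 0 ≤ q.1 ∧ q.1 ≤ q.2 ∧ q.2 ≤ T}
  chen : ∀ ⦃s t u : ℝ⦄, 0 ≤ s → s ≤ t → t ≤ u → u ≤ T →
    XX s u = XX s t + XX t u + tensorE (x t - x s) (x u - x t)
  bound_x : ∀ ⦃s t : ℝ⦄, 0 ≤ s → s ≤ t → t ≤ T → ‖x t - x s‖ ≤ ω s t ^ (1 / p)
  bound_XX : ∀ ⦃s t : ℝ⦄, 0 ≤ s → s ≤ t → t ≤ T → ‖XX s t‖ ≤ ω s t ^ (2 / p)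
/-- The rough path `(x, XX)` is weak-geometric: the symmetric part of `XX s t` is
`(1/2) x_{s,t} ⊗ x_{s,t}`. -/
def IsWeakGeometric (T : ℝ) {k : ℕ} (x : ℝ → Euc k)
    (XX : ℝ → ℝ → EuclideanSpace ℝ (Fin k × Fin k)) : Prop :=
  ∀ ⦃s t : ℝ⦄, 0 ≤ s → s ≤ t → t ≤ T → ∀ i j : Fin k,
    XX s t (i, j) + XX s t (j, i) = (x t - x s) i * (x t - x s) j
/-- `(y, y')` is a `V`-valued rough path controlled by `X = (x, ·)` (with control `ω`)
on the interval `[a, b]`. -/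
def IsCRP (p : ℝ) {k : ℕ} (ω : ℝ → ℝ → ℝ) (x : ℝ → Euc k)
    {V : Type*} [NormedAddCommGroup V] [NormedSpace ℝ V]
    (a b : ℝ) (y : ℝ → V) (y' : ℝ → Euc k →L[ℝ] V) : Prop :=
  ContinuousOn y (Set.Icc a b) ∧ ContinuousOn y' (Set.Icc a b) ∧
    ∃ C : ℝ, ∀ ⦃s t : ℝ⦄, a ≤ s → s ≤ t → t ≤ b →
      ‖y t - y s - y' s (x t - x s)‖ ≤ C * ω s t ^ (2 / p) ∧
      ‖y' t - y' s‖ ≤ C * ω s t ^ (1 / p)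

/-- The second-order RDE coefficient `(w, w̃) ↦ (∂_{F_w(a)} F_{w̃})(a)`, i.e. the directional
derivative of `c ↦ F_{w̃}(c)` at `c = a` in the direction `F_w(a)`. -/
def rdeQuad {d k : ℕ} (F : Euc d → Euc k →L[ℝ] Euc d) (a : Euc d)
    (w wt : Euc k) : Euc d :=
  fderiv ℝ (fun c => F c wt) a (F a w)

section helpers
open Set Filter Topology

variable {E V : Type*} [NormedAddCommGroup E] [NormedSpace ℝ E]
  [NormedAddCommGroup V] [NormedSpace ℝ V]

theorem aux_mvt {s : Set E} (hs : Convex ℝ s) {g : E → V} {g' : E → E →L[ℝ] V}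
    {a b : E} (ha : a ∈ s) (hb : b ∈ s) (hg : ∀ y ∈ s, HasFDerivAt g (g' y) y)
    {C : ℝ} (hC : 0 ≤ C) (n : ℕ) (h : ∀ y ∈ s, ‖g' y‖ ≤ C * ‖y - a‖ ^ n) :
    ‖g b - g a‖ ≤ C * ‖b - a‖ ^ (n + 1) := by
  have hconv : Convex ℝ (s ∩ Metric.closedBall a ‖b - a‖) := hs.inter (convex_closedBall _ _)
  have := hconv.norm_image_sub_le_of_norm_hasFDerivWithin_le (f := g) (f' := g')
    (C := C * ‖b - a‖ ^ n) (x := a) (y := b)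
    (fun y hy => (hg y hy.1).hasFDerivWithinAt)
    (fun y hy => (h y hy.1).trans (by
      have : ‖y - a‖ ≤ ‖b - a‖ := by simpa [dist_eq_norm] using hy.2
      gcongr)) ⟨ha, by simp⟩ ⟨hb, by simp [dist_eq_norm]⟩
  rw [pow_succ, ← mul_assoc]; exact this

theorem aux_loc0 {U : Set E} (hU : IsOpen U) {g : E → V} (hg : ContDiffOn ℝ (⊤ : ℕ∞) g U)
    {a0 : E} (h0 : a0 ∈ U) :
    ∃ C r : ℝ, 0 ≤ C ∧ 0 < r ∧ Metric.ball a0 r ⊆ U ∧ ∀ a ∈ Metric.ball a0 r,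
      ∀ b ∈ Metric.ball a0 r, ‖g b - g a‖ ≤ C * ‖b - a‖ ^ 1 := by
  have h1 : ContDiffAt ℝ 1 g a0 :=
    ((hg.contDiffAt (hU.mem_nhds h0)).of_le (by exact_mod_cast le_top))
  obtain ⟨K, t, ht, hL⟩ := h1.exists_lipschitzOnWith
  obtain ⟨r, hr, hrt⟩ := Metric.mem_nhds_iff.1 (inter_mem ht (hU.mem_nhds h0))
  refine ⟨K, r, K.2, hr, fun y hy => (hrt hy).2, fun a ha b hb => ?_⟩
  simpa [dist_eq_norm] using hL.dist_le_mul b (hrt hb).1 a (hrt ha).1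

theorem aux_cd {U : Set E} (hU : IsOpen U) {g : E → V} (hg : ContDiffOn ℝ (⊤ : ℕ∞) g U) :
    ContDiffOn ℝ (⊤ : ℕ∞) (fderiv ℝ g) U :=
  hg.fderiv_of_isOpen hU (by simp)

theorem aux_hd {U : Set E} (hU : IsOpen U) {g : E → V} (hg : ContDiffOn ℝ (⊤ : ℕ∞) g U)
    {a : E} (h0 : a ∈ U) : HasFDerivAt g (fderiv ℝ g a) a :=
  ((hg.contDiffAt (hU.mem_nhds h0)).differentiableAt (by simp)).hasFDerivAt

theorem aux_loc1 {U : Set E} (hU : IsOpen U) {g : E → V} (hg : ContDiffOn ℝ (⊤ : ℕ∞) g U)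
    {a0 : E} (h0 : a0 ∈ U) :
    ∃ C r : ℝ, 0 ≤ C ∧ 0 < r ∧ Metric.ball a0 r ⊆ U ∧ ∀ a ∈ Metric.ball a0 r,
      ∀ b ∈ Metric.ball a0 r, ‖g b - g a - fderiv ℝ g a (b - a)‖ ≤ C * ‖b - a‖ ^ 2 := by
  obtain ⟨C, r, hC, hr, hrU, h⟩ := aux_loc0 hU (aux_cd hU hg) h0
  refine ⟨C, r, hC, hr, hrU, fun a ha b hb => ?_⟩
  have := aux_mvt (convex_ball a0 r) (g := fun y => g y - g a - fderiv ℝ g a (y - a))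
    (g' := fun y => fderiv ℝ g y - fderiv ℝ g a) ha hb (fun y hy => by
      have h1 := aux_hd hU hg (hrU hy)
      have h2 := (fderiv ℝ g a).hasFDerivAt.comp y ((hasFDerivAt_id y).sub_const a)
      exact (h1.sub_const (g a)).sub h2) hC 1 (fun y hy => h a ha y hy)
  simpa using this

theorem aux_symm {U : Set E} (hU : IsOpen U) {g : E → V} (hg : ContDiffOn ℝ (⊤ : ℕ∞) g U)
    {a : E} (h0 : a ∈ U) (u v : E) :
    fderiv ℝ (fderiv ℝ g) a u v = fderiv ℝ (fderiv ℝ g) a v u :=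
  second_derivative_symmetric_of_eventually
    (eventually_of_mem (hU.mem_nhds h0) fun _ hy => aux_hd hU hg hy)
    (aux_hd hU (aux_cd hU hg) h0) u v

theorem aux_loc2 {U : Set E} (hU : IsOpen U) {g : E → V} (hg : ContDiffOn ℝ (⊤ : ℕ∞) g U)
    {a0 : E} (h0 : a0 ∈ U) :
    ∃ C r : ℝ, 0 ≤ C ∧ 0 < r ∧ Metric.ball a0 r ⊆ U ∧ ∀ a ∈ Metric.ball a0 r,
      ∀ b ∈ Metric.ball a0 r, ‖g b - g a - fderiv ℝ g a (b - a)
        - (1 / 2 : ℝ) • fderiv ℝ (fderiv ℝ g) a (b - a) (b - a)‖ ≤ C * ‖b - a‖ ^ 3 := by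
  obtain ⟨C, r, hC, hr, hrU, h⟩ := aux_loc1 hU (aux_cd hU hg) h0
  refine ⟨C, r, hC, hr, hrU, fun a ha b hb => ?_⟩
  have := aux_mvt (convex_ball a0 r) (g := fun y => g y - g a - fderiv ℝ g a (y - a)
        - (1 / 2 : ℝ) • fderiv ℝ (fderiv ℝ g) a (y - a) (y - a))
    (g' := fun y => fderiv ℝ g y - fderiv ℝ g a - fderiv ℝ (fderiv ℝ g) a (y - a)) ha hb
    (fun y hy => by
      have h1 := aux_hd hU hg (hrU hy)
      have hs : HasFDerivAt (fun y : E => y - a) (ContinuousLinearMap.id ℝ E) y :=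
        (hasFDerivAt_id y).sub_const a
      have h2 := (fderiv ℝ g a).hasFDerivAt.comp y hs
      have h3 := (fderiv ℝ (fderiv ℝ g) a).hasFDerivAt.comp y hs
      have h4 := (h3.clm_apply hs).const_smul (1 / 2 : ℝ)
      refine (((h1.sub_const (g a)).sub h2).sub h4).congr_fderiv ?_
      ext u
      have := aux_symm hU hg (hrU ha) u (y - a)
      simp only [map_sub, _root_.sub_apply] at this
      simp
      rw [this, ← two_smul ℝ, smul_smul]; norm_num) hC 2 (fun y hy => h a ha y hy)
  simpa using this

theorem aux_glob {K : Set E} (hK : IsCompact K) {R : E → E → V}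
    (hR : ContinuousOn (fun q : E × E => R q.1 q.2) (K ×ˢ K)) (n : ℕ)
    (hloc : ∀ a0 ∈ K, ∃ C r : ℝ, 0 ≤ C ∧ 0 < r ∧ ∀ a ∈ Metric.ball a0 r,
      ∀ b ∈ Metric.ball a0 r, ‖R a b‖ ≤ C * ‖b - a‖ ^ n) :
    ∃ C : ℝ, 0 ≤ C ∧ ∀ a ∈ K, ∀ b ∈ K, ‖R a b‖ ≤ C * ‖b - a‖ ^ n := by
  have key : ∃ C : ℝ, 0 ≤ C ∧ ∀ q ∈ K ×ˢ K, ‖R q.1 q.2‖ ≤ C * ‖q.2 - q.1‖ ^ n := by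
    refine (hK.prod hK).induction_on
      (p := fun S => ∃ C : ℝ, 0 ≤ C ∧ ∀ q ∈ S, ‖R q.1 q.2‖ ≤ C * ‖q.2 - q.1‖ ^ n) ?_ ?_ ?_ ?_
    · exact ⟨0, le_rfl, by simp⟩
    · rintro S S' hS ⟨C, hC, h⟩
      exact ⟨C, hC, fun q hq => h q (hS hq)⟩
    · rintro S S' ⟨C, hC, h⟩ ⟨C', hC', h'⟩
      refine ⟨C + C', by positivity, ?_⟩
      rintro q (hq | hq)
      · exact (h q hq).trans (by gcongr; linarith)
      · exact (h' q hq).trans (by gcongr; linarith)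
    · rintro ⟨a0, b0⟩ ⟨ha0, hb0⟩
      by_cases hab : a0 = b0
      · subst hab
        obtain ⟨C, r, hC, hr, h⟩ := hloc a0 ha0
        exact ⟨Metric.ball a0 r ×ˢ Metric.ball a0 r,
          mem_nhdsWithin_of_mem_nhds (prod_mem_nhds (Metric.ball_mem_nhds _ hr)
            (Metric.ball_mem_nhds _ hr)), C, hC, fun q hq => h _ hq.1 _ hq.2⟩
      · have hc := (hR (a0, b0) ⟨ha0, hb0⟩).norm
        have h1 : ∀ᶠ q in 𝓝[K ×ˢ K] (a0, b0), ‖R q.1 q.2‖ < ‖R a0 b0‖ + 1 :=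
          hc.eventually (gt_mem_nhds (by simp))
        have hpos : 0 < ‖b0 - a0‖ := norm_pos_iff.2 (sub_ne_zero.2 (Ne.symm hab))
        have hcont : ContinuousAt (fun q : E × E => ‖q.2 - q.1‖) (a0, b0) := by fun_prop
        have h2 : ∀ᶠ q in 𝓝[K ×ˢ K] (a0, b0), ‖b0 - a0‖ / 2 < ‖q.2 - q.1‖ :=
          (hcont.eventually (lt_mem_nhds (half_lt_self hpos))).filter_mono nhdsWithin_le_nhds
        refine ⟨_, h1.and h2, (‖R a0 b0‖ + 1) / (‖b0 - a0‖ / 2) ^ n, by positivity, ?_⟩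
        rintro q ⟨hq1, hq2⟩
        calc ‖R q.1 q.2‖ ≤ ‖R a0 b0‖ + 1 := hq1.le
          _ = (‖R a0 b0‖ + 1) / (‖b0 - a0‖ / 2) ^ n * (‖b0 - a0‖ / 2) ^ n := by
            field_simp
          _ ≤ _ := by gcongr
  obtain ⟨C, hC, h⟩ := key
  exact ⟨C, hC, fun a ha b hb => h (a, b) ⟨ha, hb⟩⟩

theorem aux_bdd {K : Set E} (hK : IsCompact K) {g : E → V} (hg : ContinuousOn g K) :
    ∃ C : ℝ, 0 ≤ C ∧ ∀ a ∈ K, ‖g a‖ ≤ C := by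
  obtain ⟨C, h⟩ := hK.exists_bound_of_continuousOn hg
  exact ⟨|C|, abs_nonneg _, fun a ha => (h a ha).trans (le_abs_self _)⟩

theorem aux_g0 {U K : Set E} (hU : IsOpen U) (hK : IsCompact K) (hKU : K ⊆ U) {g : E → V}
    (hg : ContDiffOn ℝ (⊤ : ℕ∞) g U) :
    ∃ C : ℝ, 0 ≤ C ∧ ∀ a ∈ K, ∀ b ∈ K, ‖g b - g a‖ ≤ C * ‖b - a‖ ^ 1 := by
  refine aux_glob hK (R := fun a b => g b - g a) ?_ 1 fun a0 ha0 => ?_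
  · have h1 : ContinuousOn (fun q : E × E => g q.1) (K ×ˢ K) :=
      (hg.continuousOn.mono hKU).comp continuousOn_fst fun q hq => hq.1
    have h2 : ContinuousOn (fun q : E × E => g q.2) (K ×ˢ K) :=
      (hg.continuousOn.mono hKU).comp continuousOn_snd fun q hq => hq.2
    exact h2.sub h1
  · obtain ⟨C, r, h⟩ := aux_loc0 hU hg (hKU ha0)
    exact ⟨C, r, h.1, h.2.1, h.2.2.2⟩

theorem aux_g1 {U K : Set E} (hU : IsOpen U) (hK : IsCompact K) (hKU : K ⊆ U) {g : E → V}
    (hg : ContDiffOn ℝ (⊤ : ℕ∞) g U) :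
    ∃ C : ℝ, 0 ≤ C ∧ ∀ a ∈ K, ∀ b ∈ K,
      ‖g b - g a - fderiv ℝ g a (b - a)‖ ≤ C * ‖b - a‖ ^ 2 := by
  refine aux_glob hK (R := fun a b => g b - g a - fderiv ℝ g a (b - a)) ?_ 2 fun a0 ha0 => ?_
  · have h1 : ContinuousOn (fun q : E × E => g q.1) (K ×ˢ K) :=
      (hg.continuousOn.mono hKU).comp continuousOn_fst fun q hq => hq.1
    have h2 : ContinuousOn (fun q : E × E => g q.2) (K ×ˢ K) :=
      (hg.continuousOn.mono hKU).comp continuousOn_snd fun q hq => hq.2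
    have h3 : ContinuousOn (fun q : E × E => fderiv ℝ g q.1) (K ×ˢ K) :=
      ((aux_cd hU hg).continuousOn.mono hKU).comp continuousOn_fst fun q hq => hq.1
    exact (h2.sub h1).sub (h3.clm_apply (continuousOn_snd.sub continuousOn_fst))
  · obtain ⟨C, r, h⟩ := aux_loc1 hU hg (hKU ha0)
    exact ⟨C, r, h.1, h.2.1, h.2.2.2⟩

theorem aux_g2 {U K : Set E} (hU : IsOpen U) (hK : IsCompact K) (hKU : K ⊆ U) {g : E → V}
    (hg : ContDiffOn ℝ (⊤ : ℕ∞) g U) :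
    ∃ C : ℝ, 0 ≤ C ∧ ∀ a ∈ K, ∀ b ∈ K,
      ‖g b - g a - fderiv ℝ g a (b - a)
        - (1 / 2 : ℝ) • fderiv ℝ (fderiv ℝ g) a (b - a) (b - a)‖ ≤ C * ‖b - a‖ ^ 3 := by
  refine aux_glob hK (R := fun a b => g b - g a - fderiv ℝ g a (b - a)
        - (1 / 2 : ℝ) • fderiv ℝ (fderiv ℝ g) a (b - a) (b - a)) ?_ 3 fun a0 ha0 => ?_
  · have h1 : ContinuousOn (fun q : E × E => g q.1) (K ×ˢ K) :=
      (hg.continuousOn.mono hKU).comp continuousOn_fst fun q hq => hq.1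
    have h2 : ContinuousOn (fun q : E × E => g q.2) (K ×ˢ K) :=
      (hg.continuousOn.mono hKU).comp continuousOn_snd fun q hq => hq.2
    have h3 : ContinuousOn (fun q : E × E => fderiv ℝ g q.1) (K ×ˢ K) :=
      ((aux_cd hU hg).continuousOn.mono hKU).comp continuousOn_fst fun q hq => hq.1
    have h4 : ContinuousOn (fun q : E × E => fderiv ℝ (fderiv ℝ g) q.1) (K ×ˢ K) :=
      ((aux_cd hU (aux_cd hU hg)).continuousOn.mono hKU).comp continuousOn_fst
        fun q hq => hq.1
    have h5 : ContinuousOn (fun q : E × E => q.2 - q.1) (K ×ˢ K) :=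
      continuousOn_snd.sub continuousOn_fst
    exact ((h2.sub h1).sub (h3.clm_apply h5)).sub
      (((h4.clm_apply h5).clm_apply h5).const_smul (1 / 2 : ℝ))
  · obtain ⟨C, r, h⟩ := aux_loc2 hU hg (hKU ha0)
    exact ⟨C, r, h.1, h.2.1, h.2.2.2⟩

/-- chain rule for the second-order coefficient -/
theorem aux_quad {k d d' : ℕ} {Us : Set (Euc d)} {Uts : Set (Euc d')}
    (hUs : IsOpen Us) (hUts : IsOpen Uts)
    {f : Euc d → Euc d'} (hf : ContDiffOn ℝ (⊤ : ℕ∞) f Us) (hfmaps : Set.MapsTo f Us Uts)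
    {F : Euc d → Euc k →L[ℝ] Euc d} (hF : ContDiffOn ℝ (⊤ : ℕ∞) F Us)
    {Ft : Euc d' → Euc k →L[ℝ] Euc d'} (hFt : ContDiffOn ℝ (⊤ : ℕ∞) Ft Uts)
    (hrel : ∀ c ∈ Us, ∀ w : Euc k, fderiv ℝ f c (F c w) = Ft (f c) w)
    {a : Euc d} (ha : a ∈ Us) (w wt : Euc k) :
    rdeQuad Ft (f a) w wt = fderiv ℝ (fderiv ℝ f) a (F a w) (F a wt)
      + fderiv ℝ f a (rdeQuad F a w wt) := by
  have hfa := aux_hd hUs hf ha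
  have hffa := aux_hd hUs (aux_cd hUs hf) ha
  have hFw : HasFDerivAt (fun c => F c wt) (fderiv ℝ (fun c => F c wt) a) a :=
    ((aux_hd hUs hF ha).differentiableAt.clm_apply (differentiableAt_const wt)).hasFDerivAt
  have hFtw : HasFDerivAt (fun c => Ft c wt) (fderiv ℝ (fun c => Ft c wt) (f a)) (f a) :=
    ((aux_hd hUts hFt (hfmaps ha)).differentiableAt.clm_apply
      (differentiableAt_const wt)).hasFDerivAt
  have h1 := hffa.clm_apply hFw
  have h2 := hFtw.comp a hfa
  have h3 := h2.congr_of_eventuallyEq (f₁ := fun c => fderiv ℝ f c (F c wt))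
    (eventually_of_mem (hUs.mem_nhds ha) fun c hc => hrel c hc wt)
  have h4 := DFunLike.congr_fun (h1.unique h3) (F a w)
  simp only [rdeQuad]
  rw [← hrel a ha w]
  simp at h4
  rw [← h4, add_comm]

theorem aux_expand {k : ℕ} (ξ : Euc k) : ξ = ∑ i, ξ i • (eb i : Euc k) := by
  ext j
  simp [eb, Pi.single_apply]

theorem aux_geo {k d : ℕ} (B : Euc d →L[ℝ] Euc d →L[ℝ] V) (A : Euc k →L[ℝ] Euc d)
    (hB : ∀ u v, B u v = B v u) (ξ : Euc k) (X : EuclideanSpace ℝ (Fin k × Fin k))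
    (hX : ∀ i j, X (i, j) + X (j, i) = ξ i * ξ j) :
    (1 / 2 : ℝ) • B (A ξ) (A ξ) = ∑ q : Fin k × Fin k, X q • B (A (eb q.1)) (A (eb q.2)) := by
  have e1 : B (A ξ) (A ξ) = ∑ i, ∑ j, (ξ i * ξ j) • B (A (eb i)) (A (eb j)) := by
    conv_lhs => rw [aux_expand ξ]
    simp only [map_sum, map_smul, _root_.sum_apply, _root_.smul_apply,
      Finset.smul_sum, smul_smul]
    exact Finset.sum_congr rfl fun i _ => Finset.sum_congr rfl fun j _ => by rw [hB]
  have e2 : ∑ i, ∑ j, X (j, i) • B (A (eb i)) (A (eb j))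
      = ∑ i, ∑ j, X (i, j) • B (A (eb i)) (A (eb j)) := by
    rw [Finset.sum_comm]
    refine Finset.sum_congr rfl fun i _ => Finset.sum_congr rfl fun j _ => ?_
    rw [hB]
  rw [e1, Fintype.sum_prod_type]
  simp only [← hX, add_smul, Finset.sum_add_distrib]
  rw [e2, ← two_smul ℝ, smul_smul]; norm_num

end helpers

/-- **Related dynamical systems map solutions of rough differential equations to solutions**
(Euclidean version of Theorem 6.11 of Driver–Semko): if `F` and `F̃` are `f`-related and
`(z, z')` solves `dz = F_{dX}(z)` in `U`, then `(f ∘ z, f'(z) ∘ z')` solves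
`dz̃ = F̃_{dX}(z̃)`. -/
theorem related_dynamical_systems_rde
    {T p : ℝ} (hT : 0 < T) (hp1 : 1 ≤ p) (hp3 : p < 3) {k : ℕ} (hk : 1 ≤ k)
    {ω : ℝ → ℝ → ℝ} (hω : IsControl T ω)
    {x : ℝ → Euc k} {XX : ℝ → ℝ → EuclideanSpace ℝ (Fin k × Fin k)}
    (hX : IsRoughPath T p ω x XX) (hgeo : IsWeakGeometric T x XX)
    {d d' : ℕ} {Us : Set (Euc d)} {Uts : Set (Euc d')}
    (hUs : IsOpen Us) (hUts : IsOpen Uts)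
    {f : Euc d → Euc d'} (hf : ContDiffOn ℝ (⊤ : ℕ∞) f Us) (hfmaps : Set.MapsTo f Us Uts)
    {F : Euc d → Euc k →L[ℝ] Euc d} (hF : ContDiffOn ℝ (⊤ : ℕ∞) F Us)
    {Ft : Euc d' → Euc k →L[ℝ] Euc d'} (hFt : ContDiffOn ℝ (⊤ : ℕ∞) Ft Uts)
    (hrel : ∀ c ∈ Us, ∀ w : Euc k, fderiv ℝ f c (F c w) = Ft (f c) w)
    {z : ℝ → Euc d} {z' : ℝ → Euc k →L[ℝ] Euc d}
    (hz'eq : ∀ s ∈ Set.Icc (0 : ℝ) T, z' s = F (z s))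
    (hzU : ∀ s ∈ Set.Icc (0 : ℝ) T, z s ∈ Us)
    (hcrp : IsCRP p ω x 0 T z z')
    (hrde : ∃ C δ : ℝ, 0 < δ ∧ ∀ ⦃s t : ℝ⦄, 0 ≤ s → s ≤ t → t ≤ T → t - s ≤ δ →
      ‖z t - z s - F (z s) (x t - x s) - tapply (rdeQuad F (z s)) (XX s t)‖
        ≤ C * ω s t ^ (3 / p)) :
    (∀ s ∈ Set.Icc (0 : ℝ) T, (fderiv ℝ f (z s)).comp (z' s) = Ft (f (z s))) ∧
    IsCRP p ω x 0 T (fun s => f (z s)) (fun s => (fderiv ℝ f (z s)).comp (z' s)) ∧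
    ∃ C δ : ℝ, 0 < δ ∧ ∀ ⦃s t : ℝ⦄, 0 ≤ s → s ≤ t → t ≤ T → t - s ≤ δ →
      ‖f (z t) - f (z s) - Ft (f (z s)) (x t - x s) -
          tapply (rdeQuad Ft (f (z s))) (XX s t)‖
        ≤ C * ω s t ^ (3 / p) := by
  obtain ⟨hzc, hz'c, C2, hC2⟩ := hcrp
  obtain ⟨C3, δ, hδ, hC3⟩ := hrde
  have hcomp : ∀ s ∈ Set.Icc (0 : ℝ) T, (fderiv ℝ f (z s)).comp (z' s) = Ft (f (z s)) := by
    intro s hs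
    ext1 w
    rw [hz'eq s hs]
    exact hrel _ (hzU s hs) w
  have hK : IsCompact (z '' Set.Icc 0 T) := isCompact_Icc.image_of_continuousOn hzc
  have hKU : z '' Set.Icc 0 T ⊆ Us := by rintro _ ⟨s, hs, rfl⟩; exact hzU s hs
  have hFtf : ContDiffOn ℝ (⊤ : ℕ∞) (fun c => Ft (f c)) Us := hFt.comp hf hfmaps
  obtain ⟨M0, hM0, hL0⟩ := aux_g0 hUs hK hKU hFtf
  obtain ⟨M1, hM1, hL1⟩ := aux_g1 hUs hK hKU hf
  obtain ⟨M2, hM2, hL2⟩ := aux_g2 hUs hK hKU hf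
  obtain ⟨N1, hN1, hB1⟩ := aux_bdd hK ((aux_cd hUs hf).continuousOn.mono hKU)
  obtain ⟨N2, hN2, hB2⟩ := aux_bdd hK ((aux_cd hUs (aux_cd hUs hf)).continuousOn.mono hKU)
  obtain ⟨NF, hNF, hBF⟩ := aux_bdd hK (hF.continuousOn.mono hKU)
  have hp0 : 0 < p := by linarith
  set H : ℝ := ω 0 T ^ (1 / p) with hH
  have hH0 : 0 ≤ H := Real.rpow_nonneg (hω.nonneg le_rfl hT.le le_rfl) _
  have hη : ∀ s t, 0 ≤ s → s ≤ t → t ≤ T → 0 ≤ ω s t ^ (1 / p) ∧ ω s t ^ (1 / p) ≤ H ∧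
      ω s t ^ (2 / p) = (ω s t ^ (1 / p)) ^ 2 ∧ ω s t ^ (3 / p) = (ω s t ^ (1 / p)) ^ 3 := by
    intro s t hs hst ht
    have h0 := hω.nonneg hs hst ht
    refine ⟨Real.rpow_nonneg h0 _, Real.rpow_le_rpow h0 ?_ (by positivity), ?_, ?_⟩
    · have h1 := hω.superadditive le_rfl hs hst ht
      have h2 := hω.superadditive le_rfl (hs.trans hst) ht le_rfl
      have h3 := hω.nonneg le_rfl hs (hst.trans ht)
      have h4 := hω.nonneg (hs.trans hst) ht le_rfl
      linarith
    · rw [← Real.rpow_natCast, ← Real.rpow_mul h0]; congr 1; push_cast; ring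
    · rw [← Real.rpow_natCast, ← Real.rpow_mul h0]; congr 1; push_cast; ring
  have hD : ∀ s t, 0 ≤ s → s ≤ t → t ≤ T →
      ‖z t - z s - F (z s) (x t - x s)‖ ≤ |C2| * (ω s t ^ (1 / p)) ^ 2 := by
    intro s t hs hst ht
    obtain ⟨h0, h1, h2, h3⟩ := hη s t hs hst ht
    have := (hC2 hs hst ht).1
    rw [hz'eq s ⟨hs, hst.trans ht⟩, h2] at this
    exact this.trans (by gcongr; exact le_abs_self _)
  have hU1 : ∀ s t, 0 ≤ s → s ≤ t → t ≤ T →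
      ‖F (z s) (x t - x s)‖ ≤ NF * ω s t ^ (1 / p) := by
    intro s t hs hst ht
    refine ((F (z s)).le_opNorm _).trans ?_
    have h1 := hBF (z s) ⟨s, ⟨hs, hst.trans ht⟩, rfl⟩
    have h2 := hX.bound_x hs hst ht
    gcongr
  obtain ⟨C1, hC1def⟩ : ∃ C1, C1 = |C2| * H + NF := ⟨_, rfl⟩
  have hC10 : 0 ≤ C1 := by rw [hC1def]; positivity
  have hV : ∀ s t, 0 ≤ s → s ≤ t → t ≤ T → ‖z t - z s‖ ≤ C1 * ω s t ^ (1 / p) := by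
    intro s t hs hst ht
    obtain ⟨h0, h1, h2, h3⟩ := hη s t hs hst ht
    calc ‖z t - z s‖ = ‖(z t - z s - F (z s) (x t - x s)) + F (z s) (x t - x s)‖ := by
          rw [sub_add_cancel]
      _ ≤ |C2| * (ω s t ^ (1 / p)) ^ 2 + NF * ω s t ^ (1 / p) :=
          (norm_add_le _ _).trans (add_le_add (hD s t hs hst ht) (hU1 s t hs hst ht))
      _ = |C2| * ω s t ^ (1 / p) * ω s t ^ (1 / p) + NF * ω s t ^ (1 / p) := by ring
      _ ≤ |C2| * H * ω s t ^ (1 / p) + NF * ω s t ^ (1 / p) := by gcongr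
      _ = C1 * ω s t ^ (1 / p) := by rw [hC1def]; ring
  refine ⟨hcomp, ⟨?_, ?_, ?_⟩, ?_⟩
  · exact hf.continuousOn.comp hzc hzU
  · have h : ContinuousOn (fun s => Ft (f (z s))) (Set.Icc 0 T) :=
      hFtf.continuousOn.comp hzc hzU
    exact h.congr hcomp
  · refine ⟨(M1 * C1 ^ 2 + N1 * |C2|) + M0 * C1, fun s t hs hst ht => ?_⟩
    obtain ⟨h0, h1, h2, h3⟩ := hη s t hs hst ht
    have hsI : s ∈ Set.Icc 0 T := ⟨hs, hst.trans ht⟩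
    have htI : t ∈ Set.Icc 0 T := ⟨hs.trans hst, ht⟩
    have hv := hV s t hs hst ht
    have hd := hD s t hs hst ht
    set η := ω s t ^ (1 / p)
    constructor
    · dsimp only
      rw [h2, hz'eq s hsI]
      calc ‖f (z t) - f (z s) - ((fderiv ℝ f (z s)).comp (F (z s))) (x t - x s)‖
          = ‖(f (z t) - f (z s) - fderiv ℝ f (z s) (z t - z s))
              + fderiv ℝ f (z s) (z t - z s - F (z s) (x t - x s))‖ := by
            congr 1
            rw [map_sub (fderiv ℝ f (z s)) (z t - z s), ContinuousLinearMap.comp_apply]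
            abel
        _ ≤ M1 * ‖z t - z s‖ ^ 2 + ‖fderiv ℝ f (z s)‖ * ‖z t - z s - F (z s) (x t - x s)‖ :=
            (norm_add_le _ _).trans (add_le_add
              (hL1 _ ⟨s, hsI, rfl⟩ _ ⟨t, htI, rfl⟩) ((fderiv ℝ f (z s)).le_opNorm _))
        _ ≤ M1 * (C1 * η) ^ 2 + N1 * (|C2| * η ^ 2) := by
            have := hB1 (z s) ⟨s, hsI, rfl⟩
            gcongr
        _ = (M1 * C1 ^ 2 + N1 * |C2|) * η ^ 2 := by ring
        _ ≤ _ := by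
            refine mul_le_mul_of_nonneg_right ?_ (by positivity)
            exact le_add_of_nonneg_right (by positivity)
    · dsimp only
      rw [hcomp s hsI, hcomp t htI]
      calc ‖Ft (f (z t)) - Ft (f (z s))‖ ≤ M0 * ‖z t - z s‖ ^ 1 :=
            hL0 _ ⟨s, hsI, rfl⟩ _ ⟨t, htI, rfl⟩
        _ ≤ M0 * (C1 * η) ^ 1 := by gcongr
        _ = M0 * C1 * η := by ring
        _ ≤ _ := by
            refine mul_le_mul_of_nonneg_right ?_ (by positivity)
            exact le_add_of_nonneg_left (by positivity)
  · refine ⟨M2 * C1 ^ 3 + N1 * |C3| + 1 / 2 * (N2 * |C2| * C1 + N2 * NF * |C2|), δ, hδ,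
      fun s t hs hst ht hts => ?_⟩
    obtain ⟨h0, h1, h2, h3⟩ := hη s t hs hst ht
    have hsI : s ∈ Set.Icc 0 T := ⟨hs, hst.trans ht⟩
    have htI : t ∈ Set.Icc 0 T := ⟨hs.trans hst, ht⟩
    have hv := hV s t hs hst ht
    have hd := hD s t hs hst ht
    have hu := hU1 s t hs hst ht
    have he := hC3 hs hst ht hts
    have hq : tapply (rdeQuad Ft (f (z s))) (XX s t)
        = (1 / 2 : ℝ) • fderiv ℝ (fderiv ℝ f) (z s) (F (z s) (x t - x s)) (F (z s) (x t - x s))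
          + fderiv ℝ f (z s) (tapply (rdeQuad F (z s)) (XX s t)) := by
      rw [aux_geo (fderiv ℝ (fderiv ℝ f) (z s)) (F (z s)) (aux_symm hUs hf (hzU s hsI))
        (x t - x s) (XX s t) (hgeo hs hst ht)]
      simp only [tapply, map_sum, map_smul]
      rw [← Finset.sum_add_distrib]
      refine Finset.sum_congr rfl fun q _ => ?_
      rw [aux_quad hUs hUts hf hfmaps hF hFt hrel (hzU s hsI), smul_add]
    rw [h3] at he ⊢
    rw [hq, ← hrel _ (hzU s hsI)]
    have hb1 := hB1 (z s) ⟨s, hsI, rfl⟩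
    have hb2 := hB2 (z s) ⟨s, hsI, rfl⟩
    have ht2 := hL2 _ ⟨s, hsI, rfl⟩ _ ⟨t, htI, rfl⟩
    set η := ω s t ^ (1 / p)
    set v := z t - z s
    set u := F (z s) (x t - x s)
    set Q := tapply (rdeQuad F (z s)) (XX s t)
    set D := fderiv ℝ f (z s)
    set B := fderiv ℝ (fderiv ℝ f) (z s)
    have he' : ‖v - u - Q‖ ≤ |C3| * η ^ 3 := he.trans (by gcongr; exact le_abs_self _)
    have hBB : ∀ a b, ‖B a b‖ ≤ N2 * ‖a‖ * ‖b‖ := fun a b =>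
      (B.le_opNorm₂ a b).trans (by gcongr)
    calc ‖f (z t) - f (z s) - D u - ((1 / 2 : ℝ) • B u u + D Q)‖
        = ‖(f (z t) - f (z s) - D v - (1 / 2 : ℝ) • B v v) + D (v - u - Q)
            + (1 / 2 : ℝ) • (B (v - u) v + B u (v - u))‖ := by
          congr 1
          simp only [map_sub, _root_.sub_apply, smul_add, smul_sub]
          abel
      _ ≤ ‖f (z t) - f (z s) - D v - (1 / 2 : ℝ) • B v v‖ + ‖D (v - u - Q)‖
            + ‖(1 / 2 : ℝ) • (B (v - u) v + B u (v - u))‖ := norm_add₃_le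
      _ ≤ M2 * (C1 * η) ^ 3 + N1 * (|C3| * η ^ 3)
            + 1 / 2 * (N2 * (|C2| * η ^ 2) * (C1 * η) + N2 * (NF * η) * (|C2| * η ^ 2)) := by
          refine add_le_add (add_le_add (ht2.trans (by gcongr))
            ((D.le_opNorm _).trans (by gcongr))) ?_
          rw [norm_smul]
          refine mul_le_mul (by norm_num) ((norm_add_le _ _).trans
            (add_le_add ((hBB _ _).trans (by gcongr)) ((hBB _ _).trans (by gcongr))))
            (norm_nonneg _) (by norm_num)
      _ = _ := by ring
end
end

section
/- Patching solutions of rough differential equations over a partition: Let X = (x, 𝕏) be a weak-geometric p-rough path with control ω on [0,T], let F : ℝ^d → L(W, ℝ^d) be smooth (F_w(a) := F(a)w), let z : [0,T] → ℝ^d be continuous, and let 0 = t₀ < t₁ < … < t_l = T be a partition of [0,T]. Suppose that for each 0 ≤ i < l there exists C_i < ∞ such that |z_t − z_s − F_{x_{s,t}}(z_s) − G_s(𝕏_{s,t})| ≤ C_i ω(s,t)^{3/p} for all t_i ≤ s ≤ t ≤ t_{i+1}, where G_s ∈ L(W ⊗ W, ℝ^d) is the linear extension of (w, w̃) ↦ (∂_{F_w(z_s)}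 F_{w̃})(z_s). Then there exists C < ∞ such that |z_t − z_s − F_{x_{s,t}}(z_s) − G_s(𝕏_{s,t})| ≤ C ω(s,t)^{3/p} for all 0 ≤ s ≤ t ≤ T. -/
noncomputable section

open scoped BigOperators

theorem aux_lip {E V : Type*} [NormedAddCommGroup E] [NormedSpace ℝ E] [ProperSpace E]
    [NormedAddCommGroup V] [NormedSpace ℝ V] {g : E → V} (hg : ContDiff ℝ 1 g) (M : ℝ) :
    ∃ K : ℝ, 0 ≤ K ∧ (∀ a ∈ Metric.closedBall (0:E) M, ‖g a‖ ≤ K) ∧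
      ∀ a ∈ Metric.closedBall (0:E) M, ∀ b ∈ Metric.closedBall (0:E) M,
        ‖g b - g a‖ ≤ K * ‖b - a‖ := by
  obtain ⟨K1, h1⟩ := (isCompact_closedBall (0:E) M).exists_bound_of_continuousOn
    hg.continuous.continuousOn
  obtain ⟨K2, h2⟩ := (isCompact_closedBall (0:E) M).exists_bound_of_continuousOn
    (hg.continuous_fderiv one_ne_zero).continuousOn
  refine ⟨max 0 (max K1 K2), le_max_left _ _, fun a ha => (h1 a ha).trans (by simp), ?_⟩
  intro a ha b hb
  refine (convex_closedBall (0:E) M).norm_image_sub_le_of_norm_fderiv_le (𝕜 := ℝ)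
    (fun c _ => (hg.differentiable one_ne_zero) c) (fun c hc => (h2 c hc).trans (by simp)) ha hb

theorem aux_taylor {E V : Type*} [NormedAddCommGroup E] [NormedSpace ℝ E] [ProperSpace E]
    [NormedAddCommGroup V] [NormedSpace ℝ V] {g : E → V} (hg : ContDiff ℝ 2 g) (M : ℝ) :
    ∃ K : ℝ, 0 ≤ K ∧ (∀ a ∈ Metric.closedBall (0:E) M, ‖fderiv ℝ g a‖ ≤ K) ∧
      ∀ a ∈ Metric.closedBall (0:E) M, ∀ b ∈ Metric.closedBall (0:E) M,
        ‖g b - g a - fderiv ℝ g a (b - a)‖ ≤ K * ‖b - a‖ ^ 2 := by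
  obtain ⟨K, hK, h1, h2⟩ := aux_lip (g := fderiv ℝ g) (hg.fderiv_right (m := 1) (by norm_num)) M
  refine ⟨K, hK, h1, fun a ha b hb => ?_⟩
  have := (convex_segment a b).norm_image_sub_le_of_norm_fderiv_le' (𝕜 := ℝ) (f := g)
    (φ := fderiv ℝ g a) (C := K * ‖b - a‖)
    (fun c _ => (hg.differentiable two_ne_zero) c) (fun c hc => ?_)
    (left_mem_segment ℝ a b) (right_mem_segment ℝ a b)
  · rw [pow_two, ← mul_assoc]; exact this
  · refine (h2 a ha c ((convex_closedBall (0:E) M).segment_subset ha hb hc)).trans ?_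
    gcongr
    obtain ⟨θ, h0, rfl⟩ := (segment_eq_image' ℝ a b ▸ hc : c ∈ _ '' _)
    rw [add_sub_cancel_left, norm_smul, Real.norm_of_nonneg h0.1]
    exact mul_le_of_le_one_left (norm_nonneg _) h0.2

theorem rdeQuad_eq {d k : ℕ} {F : Euc d → Euc k →L[ℝ] Euc d} (hF : ContDiff ℝ (⊤ : ℕ∞) F)
    (a : Euc d) (w wt : Euc k) : rdeQuad F a w wt = fderiv ℝ F a (F a w) wt := by
  have h : DifferentiableAt ℝ F a := (hF.differentiable (by simp)) a
  unfold rdeQuad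
  rw [fderiv_clm_apply h (differentiableAt_const _)]
  simp

theorem euc_sum {k : ℕ} (v : Euc k) : v = ∑ i, v i • eb i := by
  ext j
  simp [eb, Finset.sum_apply, Pi.single_apply]

theorem tapply_tensor {d k : ℕ} {F : Euc d → Euc k →L[ℝ] Euc d} (hF : ContDiff ℝ (⊤ : ℕ∞) F)
    (a : Euc d) (v w : Euc k) :
    tapply (rdeQuad F a) (tensorE v w) = fderiv ℝ F a (F a v) w := by
  conv_rhs => rw [euc_sum v, euc_sum w]
  simp only [tapply, rdeQuad_eq hF, map_sum, map_smul, Fintype.sum_prod_type, tensorE,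
    ContinuousLinearMap.sum_apply, ContinuousLinearMap.smul_apply]
  rw [Finset.sum_comm]
  refine Finset.sum_congr rfl fun j _ => ?_
  rw [Finset.smul_sum]
  refine Finset.sum_congr rfl fun i _ => ?_
  rw [smul_smul, mul_comm]
  rfl

theorem tapply_add {n m : ℕ} {V : Type*} [NormedAddCommGroup V] [NormedSpace ℝ V]
    (B : Euc n → Euc m → V) (X Y : EuclideanSpace ℝ (Fin n × Fin m)) :
    tapply B (X + Y) = tapply B X + tapply B Y := by
  simp [tapply, add_smul, Finset.sum_add_distrib]

theorem aux_quad_s18 {d k : ℕ} {F : Euc d → Euc k →L[ℝ] Euc d} (hF : ContDiff ℝ (⊤ : ℕ∞) F)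
    (M : ℝ) : ∃ K : ℝ, 0 ≤ K ∧
      (∀ a ∈ Metric.closedBall (0:Euc d) M, ∀ X, ‖tapply (rdeQuad F a) X‖ ≤ K * ‖X‖) ∧
      ∀ a ∈ Metric.closedBall (0:Euc d) M, ∀ b ∈ Metric.closedBall (0:Euc d) M, ∀ X,
        ‖tapply (rdeQuad F b) X - tapply (rdeQuad F a) X‖ ≤ K * ‖b - a‖ * ‖X‖ := by
  have key : ∀ q : Fin k × Fin k, ContDiff ℝ 1 (fun a => rdeQuad F a (eb q.1) (eb q.2)) := by
    intro q
    simp only [rdeQuad_eq hF]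
    have h1 : ContDiff ℝ 1 (fderiv ℝ F) := hF.fderiv_right (by norm_cast)
    have h2 : ContDiff ℝ 1 F := hF.of_le (by norm_cast)
    fun_prop
  choose K hK h1 h2 using fun q => aux_lip (key q) M
  refine ⟨∑ q, K q, Finset.sum_nonneg fun q _ => hK q, fun a ha X => ?_, fun a ha b hb X => ?_⟩
  · rw [Finset.sum_mul]
    refine norm_sum_le_of_le _ fun q _ => ?_
    rw [norm_smul, mul_comm]
    exact mul_le_mul (h1 q a ha) (PiLp.norm_apply_le X q) (norm_nonneg _) (hK q)
  · rw [Finset.sum_mul, Finset.sum_mul, tapply, tapply, ← Finset.sum_sub_distrib]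
    refine norm_sum_le_of_le _ fun q _ => ?_
    rw [← smul_sub, norm_smul, mul_comm]
    exact mul_le_mul (h2 q a ha b hb) (PiLp.norm_apply_le X q) (norm_nonneg _)
      (mul_nonneg (hK q) (norm_nonneg _))

theorem ctrl_mono {T : ℝ} {ω : ℝ → ℝ → ℝ} (hω : IsControl T ω) {s' s t t' : ℝ}
    (h0 : 0 ≤ s') (h1 : s' ≤ s) (h2 : s ≤ t) (h3 : t ≤ t') (h4 : t' ≤ T) :
    ω s t ≤ ω s' t' := by
  have a := hω.superadditive h0 h1 (h2.trans h3) h4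
  have b := hω.superadditive (h0.trans h1) h2 h3 h4
  have c := hω.nonneg h0 h1 (by linarith)
  have e := hω.nonneg (by linarith) h3 h4
  linarith

/-- the remainder -/
def remd {k d : ℕ} (x : ℝ → Euc k) (XX : ℝ → ℝ → EuclideanSpace ℝ (Fin k × Fin k))
    (F : Euc d → Euc k →L[ℝ] Euc d) (z : ℝ → Euc d) (s t : ℝ) : Euc d :=
  z t - z s - F (z s) (x t - x s) - tapply (rdeQuad F (z s)) (XX s t)

theorem patch_two
    {T p : ℝ} (hp1 : 1 ≤ p) {k : ℕ}
    {ω : ℝ → ℝ → ℝ} (hω : IsControl T ω)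
    {x : ℝ → Euc k} {XX : ℝ → ℝ → EuclideanSpace ℝ (Fin k × Fin k)}
    (hX : IsRoughPath T p ω x XX)
    {d : ℕ} {F : Euc d → Euc k →L[ℝ] Euc d} (hF : ContDiff ℝ (⊤ : ℕ∞) F)
    {z : ℝ → Euc d} (hz : ContinuousOn z (Set.Icc 0 T))
    {u v : ℝ} (hu : 0 ≤ u) (huv : u ≤ v) (hv : v ≤ T)
    (hA : ∃ C : ℝ, ∀ ⦃s t : ℝ⦄, 0 ≤ s → s ≤ t → t ≤ u →
      ‖remd x XX F z s t‖ ≤ C * ω s t ^ (3 / p))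
    (hB : ∃ C : ℝ, ∀ ⦃s t : ℝ⦄, u ≤ s → s ≤ t → t ≤ v →
      ‖remd x XX F z s t‖ ≤ C * ω s t ^ (3 / p)) :
    ∃ C : ℝ, ∀ ⦃s t : ℝ⦄, 0 ≤ s → s ≤ t → t ≤ v →
      ‖remd x XX F z s t‖ ≤ C * ω s t ^ (3 / p) := by
  obtain ⟨M, hM⟩ := isCompact_Icc.exists_bound_of_continuousOn hz
  obtain ⟨K1, hK1, k1, -⟩ := aux_lip (g := F) (hF.of_le (by norm_cast)) M
  obtain ⟨K2, hK2, k2, k2'⟩ := aux_taylor (g := F) (hF.of_le (by norm_cast)) M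
  obtain ⟨K3, hK3, k3, k3'⟩ := aux_quad_s18 hF M
  obtain ⟨A, hA⟩ := hA
  obtain ⟨B, hB⟩ := hB
  have hp : 0 < p := by linarith
  have e2 : ∀ w : ℝ, 0 ≤ w → w ^ (2 / p) = (w ^ (1 / p)) ^ 2 := fun w hw => by
    rw [← Real.rpow_natCast, ← Real.rpow_mul hw]; congr 1; push_cast; ring
  have e3 : ∀ w : ℝ, 0 ≤ w → w ^ (3 / p) = (w ^ (1 / p)) ^ 3 := fun w hw => by
    rw [← Real.rpow_natCast, ← Real.rpow_mul hw]; congr 1; push_cast; ring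
  set Θ := ω 0 T ^ (1 / p) with hΘ
  set A' := max A 0
  set B' := max B 0
  have hA' : 0 ≤ A' := le_max_right _ _
  have hB' : 0 ≤ B' := le_max_right _ _
  set P := A' * Θ + K3
  set L := P * Θ + K1
  refine ⟨A' + B' + (K2 * L ^ 2 + K2 * P) + K3 * L, fun s t hs hst ht => ?_⟩
  have hωst : 0 ≤ ω s t := hω.nonneg hs hst (ht.trans hv)
  have hT0 : 0 ≤ ω 0 T := hω.nonneg le_rfl (by linarith) le_rfl
  have hΘ0 : 0 ≤ Θ := Real.rpow_nonneg hT0 _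
  have hP : 0 ≤ P := by positivity
  have hL : 0 ≤ L := by positivity
  have h30 : 0 ≤ ω s t ^ (3 / p) := Real.rpow_nonneg hωst _
  rcases le_total t u with htu | hut
  · refine (hA hs hst htu).trans (mul_le_mul_of_nonneg_right ?_ h30)
    have : A ≤ A' := le_max_left _ _
    have : 0 ≤ (K2 * L ^ 2 + K2 * P) + K3 * L := by positivity
    linarith
  rcases le_total u s with hus | hsu
  · refine (hB hus hst ht).trans (mul_le_mul_of_nonneg_right ?_ h30)
    have : B ≤ B' := le_max_left _ _
    have : 0 ≤ (K2 * L ^ 2 + K2 * P) + K3 * L := by positivity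
    linarith
  have htT : t ≤ T := ht.trans hv
  rw [e3 _ hωst]
  set θ := ω s t ^ (1 / p) with hθ
  have hθ0 : 0 ≤ θ := Real.rpow_nonneg hωst _
  have hθΘ : θ ≤ Θ := Real.rpow_le_rpow hωst (ctrl_mono hω le_rfl hs hst htT le_rfl) (by positivity)
  have hsu0 : 0 ≤ ω s u := hω.nonneg hs hsu (by linarith)
  have hut0 : 0 ≤ ω u t := hω.nonneg hu hut htT
  have m1 : ω s u ^ (1 / p) ≤ θ :=
    Real.rpow_le_rpow hsu0 (ctrl_mono hω hs le_rfl hsu hut htT) (by positivity)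
  have m2 : ω u t ^ (1 / p) ≤ θ :=
    Real.rpow_le_rpow hut0 (ctrl_mono hω hs hsu hut le_rfl htT) (by positivity)
  have n1 : 0 ≤ ω s u ^ (1 / p) := Real.rpow_nonneg hsu0 _
  have n2 : 0 ≤ ω u t ^ (1 / p) := Real.rpow_nonneg hut0 _
  have x1 : ‖x u - x s‖ ≤ θ := (hX.bound_x hs hsu (by linarith)).trans m1
  have x2 : ‖x t - x u‖ ≤ θ := (hX.bound_x hu hut htT).trans m2
  have y1 : ‖XX s u‖ ≤ θ ^ 2 := by
    refine (hX.bound_XX hs hsu (by linarith)).trans ?_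
    rw [e2 _ hsu0]; gcongr
  have y2 : ‖XX u t‖ ≤ θ ^ 2 := by
    refine (hX.bound_XX hu hut htT).trans ?_
    rw [e2 _ hut0]; gcongr
  have r1 : ‖remd x XX F z s u‖ ≤ A' * θ ^ 3 := by
    refine (hA hs hsu le_rfl).trans ?_
    rw [e3 _ hsu0]
    exact mul_le_mul (le_max_left _ _) (by gcongr) (by positivity) hA'
  have r2 : ‖remd x XX F z u t‖ ≤ B' * θ ^ 3 := by
    refine (hB le_rfl hut ht).trans ?_
    rw [e3 _ hut0]
    exact mul_le_mul (le_max_left _ _) (by gcongr) (by positivity) hB'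
  have zs : z s ∈ Metric.closedBall (0 : Euc d) M := by
    simpa using hM s ⟨hs, by linarith⟩
  have zu : z u ∈ Metric.closedBall (0 : Euc d) M := by
    simpa using hM u ⟨hu, by linarith⟩
  have d1 : ‖z u - z s - F (z s) (x u - x s)‖ ≤ P * θ ^ 2 := by
    have : z u - z s - F (z s) (x u - x s)
        = remd x XX F z s u + tapply (rdeQuad F (z s)) (XX s u) := by
      simp [remd]
    rw [this]
    calc _ ≤ A' * θ ^ 3 + K3 * θ ^ 2 := by
            refine (norm_add_le _ _).trans (add_le_add r1 ((k3 _ zs _).trans ?_))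
            gcongr
      _ = (A' * θ + K3) * θ ^ 2 := by ring
      _ ≤ (A' * Θ + K3) * θ ^ 2 := by gcongr
  have d2 : ‖z u - z s‖ ≤ L * θ := by
    have : z u - z s = (z u - z s - F (z s) (x u - x s)) + F (z s) (x u - x s) := by abel
    rw [this]
    calc _ ≤ P * θ ^ 2 + K1 * θ := by
            refine (norm_add_le _ _).trans (add_le_add d1 ?_)
            exact (F (z s)).le_of_opNorm_le_of_le (k1 _ zs) x1
      _ = (P * θ + K1) * θ := by ring
      _ ≤ (P * Θ + K1) * θ := by gcongr
  have d3 : ‖F (z u) - F (z s) - fderiv ℝ F (z s) (F (z s) (x u - x s))‖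
      ≤ (K2 * L ^ 2 + K2 * P) * θ ^ 2 := by
    have : F (z u) - F (z s) - fderiv ℝ F (z s) (F (z s) (x u - x s))
        = (F (z u) - F (z s) - fderiv ℝ F (z s) (z u - z s))
          + fderiv ℝ F (z s) (z u - z s - F (z s) (x u - x s)) := by
      rw [map_sub (fderiv ℝ F (z s)) (z u - z s)]; abel
    rw [this]
    calc _ ≤ K2 * (L * θ) ^ 2 + K2 * (P * θ ^ 2) := by
            refine (norm_add_le _ _).trans (add_le_add ?_ ?_)
            · refine (k2' _ zs _ zu).trans ?_
              gcongr
            · exact (fderiv ℝ F (z s)).le_of_opNorm_le_of_le (k2 _ zs) d1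
      _ = _ := by ring
  have main : remd x XX F z s t = remd x XX F z s u + remd x XX F z u t
      + (F (z u) - F (z s) - fderiv ℝ F (z s) (F (z s) (x u - x s))) (x t - x u)
      + (tapply (rdeQuad F (z u)) (XX u t) - tapply (rdeQuad F (z s)) (XX u t)) := by
    have hx : x t - x s = (x u - x s) + (x t - x u) := by abel
    simp only [remd]
    rw [hX.chen hs hsu hut htT, tapply_add, tapply_add, tapply_tensor hF, hx, map_add (F (z s))]
    simp only [ContinuousLinearMap.sub_apply]
    abel
  rw [main]
  have d4 : ‖(F (z u) - F (z s) - fderiv ℝ F (z s) (F (z s) (x u - x s))) (x t - x u)‖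
      ≤ (K2 * L ^ 2 + K2 * P) * θ ^ 2 * θ :=
    ContinuousLinearMap.le_of_opNorm_le_of_le _ d3 x2
  have d5 : ‖tapply (rdeQuad F (z u)) (XX u t) - tapply (rdeQuad F (z s)) (XX u t)‖
      ≤ K3 * (L * θ) * θ ^ 2 := by
    refine (k3' _ zs _ zu _).trans ?_
    gcongr
  calc _ ≤ A' * θ ^ 3 + B' * θ ^ 3 + (K2 * L ^ 2 + K2 * P) * θ ^ 2 * θ
        + K3 * (L * θ) * θ ^ 2 :=
        norm_add_le_of_le (norm_add_le_of_le (norm_add_le_of_le r1 r2) d4) d5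
    _ = _ := by ring

/-- **Patching solutions of rough differential equations over a partition**
(Lemma 6.13 of Driver–Semko): if the Davie-type RDE expansion holds with constant `Cᵢ` on
each interval of a partition `0 = t₀ < … < t_l = T`, then it holds with a single constant
on all of `[0,T]`. -/
theorem rde_patching_over_partition
    {T p : ℝ} (hT : 0 < T) (hp1 : 1 ≤ p) (hp3 : p < 3) {k : ℕ} (hk : 1 ≤ k)
    {ω : ℝ → ℝ → ℝ} (hω : IsControl T ω)
    {x : ℝ → Euc k} {XX : ℝ → ℝ → EuclideanSpace ℝ (Fin k × Fin k)}
    (hX : IsRoughPath T p ω x XX) (hgeo : IsWeakGeometric T x XX)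
    {d : ℕ} {F : Euc d → Euc k →L[ℝ] Euc d} (hF : ContDiff ℝ (⊤ : ℕ∞) F)
    {z : ℝ → Euc d} (hz : ContinuousOn z (Set.Icc 0 T))
    {l : ℕ} (hl : 1 ≤ l) {τ : ℕ → ℝ}
    (hτ0 : τ 0 = 0) (hτl : τ l = T) (hτmono : ∀ i < l, τ i < τ (i + 1))
    (hloc : ∀ i < l, ∃ Ci : ℝ, ∀ ⦃s t : ℝ⦄, τ i ≤ s → s ≤ t → t ≤ τ (i + 1) →
      ‖z t - z s - F (z s) (x t - x s) - tapply (rdeQuad F (z s)) (XX s t)‖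
        ≤ Ci * ω s t ^ (3 / p)) :
    ∃ C : ℝ, ∀ ⦃s t : ℝ⦄, 0 ≤ s → s ≤ t → t ≤ T →
      ‖z t - z s - F (z s) (x t - x s) - tapply (rdeQuad F (z s)) (XX s t)‖
        ≤ C * ω s t ^ (3 / p) := by
  have mono : ∀ i j, i ≤ j → j ≤ l → τ i ≤ τ j := by
    intro i j hij
    induction j, hij using Nat.le_induction with
    | base => intro _; exact le_rfl
    | succ n _ ih => intro h; exact (ih (by omega)).trans (hτmono n (by omega)).le
  have key : ∀ n, 1 ≤ n → n ≤ l → ∃ C : ℝ, ∀ ⦃s t : ℝ⦄, 0 ≤ s → s ≤ t → t ≤ τ n →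
      ‖remd x XX F z s t‖ ≤ C * ω s t ^ (3 / p) := by
    intro n hn
    induction n, hn using Nat.le_induction with
    | base =>
      intro h
      have := hloc 0 (by omega)
      rw [hτ0] at this
      exact this
    | succ n hn ih =>
      intro h
      refine patch_two hp1 hω hX hF hz (u := τ n) (v := τ (n + 1)) ?_ (mono _ _ (by omega) h) ?_
        (ih (by omega)) (hloc n (by omega))
      · rw [← hτ0]; exact mono _ _ (by omega) (by omega)
      · rw [← hτl]; exact mono _ _ h le_rfl
  have := key l hl le_rfl
  rw [hτl] at this
  exact this
end
end
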